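/- arXiv:2208.11110 — 3 statements merged into one kernel-verified Lean document; each statement's English description precedes it below -/
import Mathlib

section
/- Let α = {α_n}_{n∈ℕ} and β = {β_n}_{n∈ℕ} be sequences of positive real numbers such that α is subadditive, β is superadditive, and for each n ∈ ℕ the value →α^β_n = sup{d ∈ ℕ : α_d ≤ β_n} is a natural number. Then the sequence →α^β is superadditive and its asymptotic growth factor satisfies lim_{n→∞} (→α^β_n)/n = β̂/α̂, where α̂ = lim_{n→∞} α_n/n and β̂ = lim_{n→∞} β_n/n (with the conventions r/0 = ∞ and r/∞ = 0 for r ∈ ℝ_{>0}, ∞/0 = ∞, 0/∞ = 0). -/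
open Filter Topology
open scoped ENNReal

/-!
Subadditivity of `α` gives `α̂ ≤ α 1 < ∞` and superadditivity of `β` gives `β̂ ≥ β 1 > 0`, so
`β̂ / α̂` is never one of the indeterminate quotients `0 / 0` and `∞ / ∞`. Superadditivity of `T`
forces `T n → ∞`, hence `α (T n) / T n` and `α (T n + 1) / (T n + 1)` both tend to `α̂`, and
`α (T n) ≤ β n < α (T n + 1)` squeezes `T n / n` between two sequences tending to `β̂ / α̂`.
-/

/-- Subadditivity of a sequence indexed by the positive integers. Sequences are functions on `ℕ`
whose value at `0` is junk, so the condition is weaker than Mathlib's `Subadditive`. -/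
def PosSubadditive {M : Type*} [Add M] [LE M] (u : ℕ → M) : Prop :=
  ∀ i j, 1 ≤ i → 1 ≤ j → u (i + j) ≤ u i + u j

/-- Superadditivity of a sequence indexed by the positive integers, the order dual of
`PosSubadditive`; again the value at `0` is junk. -/
def PosSuperadditive {M : Type*} [Add M] [LE M] (u : ℕ → M) : Prop :=
  ∀ i j, 1 ≤ i → 1 ≤ j → u i + u j ≤ u (i + j)

/-- `T` is the sequence `→α^β`, that is `T n = sup {d | α d ≤ β n}`, and each of these suprema is
a positive integer. Attainment of the supremum encodes that it is neither `-∞` nor `∞`. -/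
def IsLastIndexLE {M : Type*} [LE M] (α β : ℕ → M) (T : ℕ → ℕ) : Prop :=
  ∀ n, 1 ≤ n → IsGreatest {d : ℕ | 1 ≤ d ∧ α d ≤ β n} (T n)

section OrderedAddMonoid

variable {M : Type*} [AddCommMonoid M] [Preorder M] [IsOrderedAddMonoid M] {u : ℕ → M}

theorem PosSubadditive.apply_mul_le_nsmul (hu : PosSubadditive u) {k d : ℕ} (hk : 1 ≤ k)
    (hd : 1 ≤ d) : u (k * d) ≤ k • u d := by
  induction k, hk using Nat.le_induction with
  | base => simp
  | succ k hk ih =>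
    calc u ((k + 1) * d) = u (k * d + d) := by rw [Nat.succ_mul]
      _ ≤ u (k * d) + u d := hu _ _ (Nat.mul_pos hk hd) hd
      _ ≤ k • u d + u d := by gcongr
      _ = (k + 1) • u d := (succ_nsmul _ _).symm

theorem PosSuperadditive.nsmul_le_apply_mul (hu : PosSuperadditive u) {k d : ℕ} (hk : 1 ≤ k)
    (hd : 1 ≤ d) : k • u d ≤ u (k * d) :=
  PosSubadditive.apply_mul_le_nsmul (M := Mᵒᵈ) (u := u) hu hk hd

end OrderedAddMonoid

theorem PosSuperadditive.tendsto_atTop {u : ℕ → ℕ} (hu : PosSuperadditive u) (h1 : 1 ≤ u 1) :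
    Tendsto u atTop atTop := by
  refine tendsto_atTop_mono' atTop ?_ tendsto_id
  filter_upwards [eventually_ge_atTop 1] with n hn
  calc n ≤ n * u 1 := Nat.le_mul_of_pos_right n h1
    _ ≤ u n := by simpa using hu.nsmul_le_apply_mul hn le_rfl

theorem PosSubadditive.ennreal_ofReal {u : ℕ → ℝ} (hu : PosSubadditive u) :
    PosSubadditive fun n => ENNReal.ofReal (u n) := fun i j hi hj =>
  (ENNReal.ofReal_le_ofReal (hu i j hi hj)).trans ENNReal.ofReal_add_le

theorem PosSuperadditive.ennreal_ofReal {u : ℕ → ℝ} (hu : PosSuperadditive u)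
    (hnonneg : ∀ n, 1 ≤ n → 0 ≤ u n) : PosSuperadditive fun n => ENNReal.ofReal (u n) :=
  fun i j hi hj => by
    rw [← ENNReal.ofReal_add (hnonneg i hi) (hnonneg j hj)]
    exact ENNReal.ofReal_le_ofReal (hu i j hi hj)

section GrowthFactor

variable {u : ℕ → ℝ≥0∞} {L : ℝ≥0∞}

theorem nsmul_div_natCast_mul (x : ℝ≥0∞) {k : ℕ} (hk : 1 ≤ k) (d : ℕ) :
    k • x / ((k * d : ℕ) : ℝ≥0∞) = x / d := by
  rw [nsmul_eq_mul, Nat.cast_mul]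
  exact ENNReal.mul_div_mul_left _ _ (Nat.cast_ne_zero.2 (by omega)) (ENNReal.natCast_ne_top k)

theorem tendsto_apply_mul_div (hL : Tendsto (fun n : ℕ => u n / n) atTop (𝓝 L)) {d : ℕ}
    (hd : 1 ≤ d) : Tendsto (fun k : ℕ => u (k * d) / ((k * d : ℕ) : ℝ≥0∞)) atTop (𝓝 L) :=
  hL.comp (tendsto_id.atTop_mul_const' hd)

theorem PosSubadditive.le_div_of_tendsto (hu : PosSubadditive u)
    (hL : Tendsto (fun n : ℕ => u n / n) atTop (𝓝 L)) {d : ℕ} (hd : 1 ≤ d) : L ≤ u d / d := by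
  refine le_of_tendsto (tendsto_apply_mul_div hL hd) ?_
  filter_upwards [eventually_ge_atTop 1] with k hk
  rw [← nsmul_div_natCast_mul (u d) hk d]
  exact ENNReal.div_le_div_right (hu.apply_mul_le_nsmul hk hd) _

theorem PosSuperadditive.div_le_of_tendsto (hu : PosSuperadditive u)
    (hL : Tendsto (fun n : ℕ => u n / n) atTop (𝓝 L)) {d : ℕ} (hd : 1 ≤ d) : u d / d ≤ L := by
  refine ge_of_tendsto (tendsto_apply_mul_div hL hd) ?_
  filter_upwards [eventually_ge_atTop 1] with k hk
  rw [← nsmul_div_natCast_mul (u d) hk d]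
  exact ENNReal.div_le_div_right (hu.nsmul_le_apply_mul hk hd) _

end GrowthFactor

theorem eventually_ne_or_ne_of_tendsto {ι X : Type*} [TopologicalSpace X] [T1Space X]
    {l : Filter ι} {f g : ι → X} {a b c : X} (hf : Tendsto f l (𝓝 a)) (hg : Tendsto g l (𝓝 b))
    (h : a ≠ c ∨ b ≠ c) : ∀ᶠ i in l, f i ≠ c ∨ g i ≠ c :=
  h.elim (fun ha => (hf.eventually_ne ha).mono fun _ => Or.inl)
    (fun hb => (hg.eventually_ne hb).mono fun _ => Or.inr)

theorem div_le_div_div_of_le {a x y s : ℝ≥0∞} (hxy : x ≤ y) (h0 : x / a ≠ 0 ∨ y / s ≠ 0)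
    (htop : x / a ≠ ⊤ ∨ y / s ≠ ⊤) : a / s ≤ y / s / (x / a) := by
  rw [ENNReal.le_div_iff_mul_le h0 htop]
  calc a / s * (x / a) = a * (x / a) / s := ENNReal.mul_div_right_comm.symm
    _ ≤ y / s := ENNReal.div_le_div_right (ENNReal.mul_div_le.trans hxy) s

theorem div_div_le_div_of_le {a x y s : ℝ≥0∞} (ha₀ : a ≠ 0) (ha : a ≠ ⊤) (hyx : y ≤ x) :
    y / s / (x / a) ≤ a / s := by
  refine ENNReal.div_le_of_le_mul ?_
  calc y / s ≤ x / s := ENNReal.div_le_div_right hyx s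
    _ = a * (x / a) / s := by rw [ENNReal.mul_div_cancel ha₀ ha]
    _ = a / s * (x / a) := ENNReal.mul_div_right_comm

theorem tendsto_natCast_div_of_apply_le_of_le_apply_succ {ι : Type*} {l : Filter ι}
    {u : ℕ → ℝ≥0∞} {v s : ι → ℝ≥0∞} {N : ι → ℕ} {A B : ℝ≥0∞}
    (hu : Tendsto (fun d : ℕ => u d / d) atTop (𝓝 A)) (hv : Tendsto (fun i => v i / s i) l (𝓝 B))
    (h0 : B ≠ 0 ∨ A ≠ 0) (htop : A ≠ ⊤ ∨ B ≠ ⊤) (hN : Tendsto N l atTop)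
    (hs : Tendsto s l (𝓝 ⊤)) (hle : ∀ᶠ i in l, u (N i) ≤ v i)
    (hge : ∀ᶠ i in l, v i ≤ u (N i + 1)) :
    Tendsto (fun i => (N i : ℝ≥0∞) / s i) l (𝓝 (B / A)) := by
  have huN : Tendsto (fun i => u (N i) / N i) l (𝓝 A) := hu.comp hN
  have huN_succ : Tendsto (fun i => u (N i + 1) / (N i + 1 : ℕ)) l (𝓝 A) :=
    hu.comp ((tendsto_add_atTop_nat 1).comp hN)
  have hs_inv : Tendsto (fun i => (s i)⁻¹) l (𝓝 0) := by
    simpa only [ENNReal.inv_top] using hs.inv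
  have hlower : Tendsto (fun i => v i / s i / (u (N i + 1) / (N i + 1 : ℕ)) - (s i)⁻¹) l
      (𝓝 (B / A)) := by
    simpa only [tsub_zero] using
      ENNReal.Tendsto.sub (ENNReal.Tendsto.div hv h0 huN_succ htop) hs_inv
        (Or.inr ENNReal.zero_ne_top)
  have hupper : Tendsto (fun i => v i / s i / (u (N i) / N i)) l (𝓝 (B / A)) :=
    ENNReal.Tendsto.div hv h0 huN htop
  have h0' : ∀ᶠ i in l, u (N i) / N i ≠ 0 ∨ v i / s i ≠ 0 :=
    eventually_ne_or_ne_of_tendsto huN hv h0.symm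
  have htop' : ∀ᶠ i in l, u (N i) / N i ≠ ⊤ ∨ v i / s i ≠ ⊤ :=
    eventually_ne_or_ne_of_tendsto huN hv htop
  refine tendsto_of_tendsto_of_tendsto_of_le_of_le' hlower hupper ?_ ?_
  · filter_upwards [hge] with i hi
    rw [tsub_le_iff_right]
    calc v i / s i / (u (N i + 1) / (N i + 1 : ℕ)) ≤ (N i + 1 : ℕ) / s i :=
          div_div_le_div_of_le (Nat.cast_ne_zero.2 (N i).succ_ne_zero)
            (ENNReal.natCast_ne_top _) hi
      _ = N i / s i + (s i)⁻¹ := by rw [Nat.cast_succ, ENNReal.add_div, one_div]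
  · filter_upwards [hle, h0', htop'] with i hi hi0 hitop
      using div_le_div_div_of_le hi hi0 hitop

namespace IsLastIndexLE

variable {M : Type*} {α β : ℕ → M} {T : ℕ → ℕ} {n : ℕ}

theorem one_le [LE M] (hT : IsLastIndexLE α β T) (hn : 1 ≤ n) : 1 ≤ T n :=
  (hT n hn).1.1

theorem apply_le [LE M] (hT : IsLastIndexLE α β T) (hn : 1 ≤ n) : α (T n) ≤ β n :=
  (hT n hn).1.2

theorem lt_apply_succ [LinearOrder M] (hT : IsLastIndexLE α β T) (hn : 1 ≤ n) :
    β n < α (T n + 1) :=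
  not_le.1 fun hle => (T n).not_succ_le_self ((hT n hn).2 ⟨Nat.le_add_left 1 _, hle⟩)

theorem posSuperadditive [AddCommMonoid M] [Preorder M] [IsOrderedAddMonoid M]
    (hT : IsLastIndexLE α β T) (hα : PosSubadditive α) (hβ : PosSuperadditive β) :
    PosSuperadditive T := fun i j hi hj => by
  refine (hT (i + j) (Nat.le_add_right_of_le hi)).2 ⟨Nat.le_add_right_of_le (hT.one_le hi), ?_⟩
  calc α (T i + T j) ≤ α (T i) + α (T j) := hα _ _ (hT.one_le hi) (hT.one_le hj)
    _ ≤ β i + β j := add_le_add (hT.apply_le hi) (hT.apply_le hj)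
    _ ≤ β (i + j) := hβ i j hi hj

end IsLastIndexLE

/-- Let `α`, `β` be sequences of positive real numbers (indexed by the
positive naturals) with `α` subadditive and `β` superadditive, and suppose that for each
`n ≥ 1` the quantity `→α^β_n = sup {d ∈ ℕ | α d ≤ β n}` is a natural number, i.e. the set
`{d | 1 ≤ d ∧ α d ≤ β n}` has a greatest element `T n`.  Then `T` is superadditive and
`lim T n / n = β̂ / α̂` (division in `ℝ≥0∞`, which realizes the conventions
`r/0 = ∞`, `r/∞ = 0` for `r > 0`, `∞/0 = ∞` and `0/∞ = 0`). -/
theorem statement_0 (α β : ℕ → ℝ) (T : ℕ → ℕ)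
    (hαpos : ∀ n, 1 ≤ n → 0 < α n)
    (hβpos : ∀ n, 1 ≤ n → 0 < β n)
    (hαsub : ∀ i j, 1 ≤ i → 1 ≤ j → α (i + j) ≤ α i + α j)
    (hβsuper : ∀ i j, 1 ≤ i → 1 ≤ j → β i + β j ≤ β (i + j))
    (hT : ∀ n, 1 ≤ n → IsGreatest {d : ℕ | 1 ≤ d ∧ α d ≤ β n} (T n))
    (A B : ℝ≥0∞)
    (hA : Tendsto (fun n : ℕ => ENNReal.ofReal (α n) / (n : ℝ≥0∞)) atTop (𝓝 A))
    (hB : Tendsto (fun n : ℕ => ENNReal.ofReal (β n) / (n : ℝ≥0∞)) atTop (𝓝 B)) :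
    (∀ m n, 1 ≤ m → 1 ≤ n → T m + T n ≤ T (m + n)) ∧
    Tendsto (fun n : ℕ => (T n : ℝ≥0∞) / (n : ℝ≥0∞)) atTop (𝓝 (B / A)) := by
  have hα : PosSubadditive α := hαsub
  have hβ : PosSuperadditive β := hβsuper
  have hT' : IsLastIndexLE α β T := hT
  have hTsuper : PosSuperadditive T := hT'.posSuperadditive hα hβ
  have hA_top : A ≠ ⊤ :=
    ne_top_of_le_ne_top (ENNReal.div_ne_top ENNReal.ofReal_ne_top (by simp))
      (hα.ennreal_ofReal.le_div_of_tendsto hA le_rfl)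
  have hB_zero : B ≠ 0 :=
    ((ENNReal.div_pos (ENNReal.ofReal_pos.2 (hβpos 1 le_rfl)).ne'
      (ENNReal.natCast_ne_top 1)).trans_le
        ((hβ.ennreal_ofReal fun n hn => (hβpos n hn).le).div_le_of_tendsto hB le_rfl)).ne'
  refine ⟨hTsuper, tendsto_natCast_div_of_apply_le_of_le_apply_succ hA hB (Or.inl hB_zero)
    (Or.inl hA_top) (hTsuper.tendsto_atTop (hT'.one_le le_rfl)) ENNReal.tendsto_nat_nhds_top ?_ ?_⟩
  · filter_upwards [eventually_ge_atTop 1] with n hn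
      using ENNReal.ofReal_le_ofReal (hT'.apply_le hn)
  · filter_upwards [eventually_ge_atTop 1] with n hn
      using ENNReal.ofReal_le_ofReal (hT'.lt_apply_succ hn).le
end

section
/- Let α = {α_n}_{n∈ℕ} be a nondecreasing superadditive sequence of natural numbers. Then the sequence ←α, where ←α_n = inf{d ∈ ℕ : α_d ≥ n}, is a nondecreasing subadditive sequence of natural numbers, and its asymptotic growth factor satisfies lim_{n→∞} (←α_n)/n = (lim_{n→∞} α_n/n)^{−1} = α̂^{−1} (with the conventions 0^{−1} = ∞ and ∞^{−1} = 0). -/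
open Filter Topology
open scoped ENNReal

/-!
Write `g x` for the first positive index at which `α` reaches the level `x`. Two indices reaching
the levels `x` and `y` add up, by superadditivity, to an index reaching `x + y`, so `g` is
subadditive. For the growth factor, `α (g x - 1) < x ≤ α (g x)` squeezes `g x / x` between
`g x / α (g x)` and `(g x - 1) / α (g x - 1) + 1 / x`. Since `g x → ∞`, both bounds tend to the
inverse of the growth factor of `α`.
-/

open scoped NNReal

section FirstIndex

variable {R : Type*} {α : ℕ → R} {x y : R}

/-- The generalized inverse `←α` of a sequence `α`: the first index `d ≥ 1` with `x ≤ α d`. The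
value `α 0` is ignored, and `firstIndex α x = 0` when no positive index reaches the level `x`. -/
noncomputable def firstIndex [LE R] (α : ℕ → R) (x : R) : ℕ :=
  sInf {d : ℕ | 1 ≤ d ∧ x ≤ α d}

theorem firstIndex_le [LE R] {d : ℕ} (hd : 1 ≤ d) (hx : x ≤ α d) : firstIndex α x ≤ d :=
  Nat.sInf_le ⟨hd, hx⟩

theorem isLeast_firstIndex [LE R] (hx : ∃ d, 1 ≤ d ∧ x ≤ α d) :
    IsLeast {d : ℕ | 1 ≤ d ∧ x ≤ α d} (firstIndex α x) :=
  ⟨Nat.sInf_mem hx, fun _ hd => firstIndex_le hd.1 hd.2⟩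

theorem firstIndex_le_firstIndex [Preorder R] (hxy : x ≤ y) (hy : ∃ d, 1 ≤ d ∧ y ≤ α d) :
    firstIndex α x ≤ firstIndex α y :=
  have ⟨hpos, hle⟩ := (isLeast_firstIndex hy).1
  firstIndex_le hpos (hxy.trans hle)

theorem firstIndex_add_le [Add R] [Preorder R] [AddLeftMono R] [AddRightMono R]
    (hsuper : ∀ i j, 1 ≤ i → 1 ≤ j → α i + α j ≤ α (i + j))
    (hx : ∃ d, 1 ≤ d ∧ x ≤ α d) (hy : ∃ d, 1 ≤ d ∧ y ≤ α d) :
    firstIndex α (x + y) ≤ firstIndex α x + firstIndex α y :=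
  have ⟨hposx, hlex⟩ := (isLeast_firstIndex hx).1
  have ⟨hposy, hley⟩ := (isLeast_firstIndex hy).1
  firstIndex_le (Nat.le_add_right_of_le hposx)
    ((add_le_add hlex hley).trans (hsuper _ _ hposx hposy))

theorem lt_of_lt_firstIndex [LinearOrder R] {d : ℕ} (hd : 1 ≤ d) (hdx : d < firstIndex α x) :
    α d < x :=
  lt_of_not_ge fun hx => (firstIndex_le hd hx).not_gt hdx

theorem tendsto_firstIndex_atTop [LinearOrder R] [NoMaxOrder R]
    (hα : ∀ x, ∃ d, 1 ≤ d ∧ x ≤ α d) : Tendsto (firstIndex α) atTop atTop := by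
  refine tendsto_atTop.2 fun K => ?_
  have hbelow : ∀ᶠ x in atTop, ∀ d ∈ Finset.range K, α d < x :=
    (eventually_all_finset _).2 fun d _ => eventually_gt_atTop (α d)
  filter_upwards [hbelow] with x hx
  by_contra! hlt
  exact (hx _ (Finset.mem_range.2 hlt)).not_ge (isLeast_firstIndex (hα x)).1.2

theorem sInf_eq_firstIndex_natCast (α : ℕ → ℕ) (n : ℕ) :
    sInf {d : ℕ | 1 ≤ d ∧ n ≤ α d} = firstIndex (fun d => (α d : ℝ≥0)) n := by
  simp only [firstIndex, Nat.cast_le]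

end FirstIndex

section Superadditive

variable {R : Type*} {α : ℕ → R}

theorem nsmul_le_of_superadditive [AddMonoid R] [Preorder R] [AddRightMono R]
    (hsuper : ∀ i j, 1 ≤ i → 1 ≤ j → α i + α j ≤ α (i + j))
    {k n : ℕ} (hk : 1 ≤ k) (hn : 1 ≤ n) : n • α k ≤ α (n * k) := by
  induction n, hn using Nat.le_induction with
  | base => simp only [one_nsmul, one_mul, le_refl]
  | succ n hn ih =>
    calc (n + 1) • α k = n • α k + α k := succ_nsmul _ _
      _ ≤ α (n * k) + α k := by gcongr
      _ ≤ α (n * k + k) := hsuper _ _ (Nat.mul_pos hn hk) hk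
      _ = α ((n + 1) * k) := by rw [Nat.succ_mul]

theorem exists_le_of_superadditive [AddCommMonoid R] [PartialOrder R] [IsOrderedAddMonoid R]
    [Archimedean R]
    (hsuper : ∀ i j, 1 ≤ i → 1 ≤ j → α i + α j ≤ α (i + j))
    {k : ℕ} (hk : 1 ≤ k) (hαk : 0 < α k) (x : R) : ∃ d, 1 ≤ d ∧ x ≤ α d := by
  obtain ⟨n, hn⟩ := Archimedean.arch x hαk
  refine ⟨(n + 1) * k, Nat.mul_pos n.succ_pos hk, ?_⟩
  calc x ≤ n • α k := hn
    _ ≤ (n + 1) • α k := nsmul_le_nsmul_left hαk.le n.le_succ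
    _ ≤ α ((n + 1) * k) := nsmul_le_of_superadditive hsuper hk n.succ_pos

end Superadditive

section GrowthFactor

variable {α : ℕ → ℝ≥0} {A : ℝ≥0∞}

theorem tendsto_natCast_div_of_tendsto_div_natCast {u : ℕ → ℝ≥0∞}
    (hA : Tendsto (fun n : ℕ => u n / n) atTop (𝓝 A)) :
    Tendsto (fun n : ℕ => n / u n) atTop (𝓝 A⁻¹) := by
  refine (tendsto_inv_iff.2 hA).congr' ?_
  filter_upwards [eventually_ne_atTop 0] with n hn
  exact ENNReal.inv_div (.inl (ENNReal.natCast_ne_top n)) (.inl (Nat.cast_ne_zero.2 hn))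

theorem div_apply_firstIndex_le {x : ℝ≥0} (hx : ∃ d, 1 ≤ d ∧ x ≤ α d) :
    (firstIndex α x : ℝ≥0∞) / α (firstIndex α x) ≤ firstIndex α x / x :=
  ENNReal.div_le_div_left (ENNReal.coe_le_coe.2 (isLeast_firstIndex hx).1.2) _

theorem firstIndex_div_le {x : ℝ≥0} (hx : 2 ≤ firstIndex α x) :
    (firstIndex α x : ℝ≥0∞) / x ≤
      (firstIndex α x - 1 : ℕ) / α (firstIndex α x - 1) + (x : ℝ≥0∞)⁻¹ := by
  have hlt : α (firstIndex α x - 1) < x := lt_of_lt_firstIndex (by lia) (by lia)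
  calc (firstIndex α x : ℝ≥0∞) / x
      = ((firstIndex α x - 1 : ℕ) + 1) / x := by
        rw [← Nat.cast_add_one, Nat.sub_add_cancel (one_le_two.trans hx)]
    _ = (firstIndex α x - 1 : ℕ) / x + (x : ℝ≥0∞)⁻¹ := by rw [ENNReal.add_div, one_div]
    _ ≤ (firstIndex α x - 1 : ℕ) / α (firstIndex α x - 1) + (x : ℝ≥0∞)⁻¹ := by gcongr

theorem tendsto_firstIndex_div (hα : ∀ x, ∃ d, 1 ≤ d ∧ x ≤ α d)
    (hA : Tendsto (fun n : ℕ => (α n : ℝ≥0∞) / n) atTop (𝓝 A)) :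
    Tendsto (fun x : ℝ≥0 => (firstIndex α x : ℝ≥0∞) / x) atTop (𝓝 A⁻¹) := by
  have hindex : Tendsto (firstIndex α) atTop atTop := tendsto_firstIndex_atTop hα
  have hinv : Tendsto (fun n : ℕ => (n : ℝ≥0∞) / α n) atTop (𝓝 A⁻¹) :=
    tendsto_natCast_div_of_tendsto_div_natCast hA
  have hlevel : Tendsto (fun x : ℝ≥0 => (x : ℝ≥0∞)⁻¹) atTop (𝓝 0) := by
    simpa only [ENNReal.inv_top, id] using
      tendsto_inv_iff.2 (ENNReal.tendsto_coe_nhds_top.2 tendsto_id)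
  have hupper := (hinv.comp ((tendsto_sub_atTop_nat 1).comp hindex)).add hlevel
  rw [add_zero] at hupper
  refine tendsto_of_tendsto_of_tendsto_of_le_of_le' (hinv.comp hindex) hupper
    (.of_forall fun x => div_apply_firstIndex_le (hα x)) ?_
  filter_upwards [hindex.eventually_ge_atTop 2] with x hx
  exact firstIndex_div_le hx

end GrowthFactor

theorem statement_5_general (α : ℕ → ℝ≥0) {k : ℕ} (hk : 1 ≤ k) (hαk : 0 < α k)
    (hsuper : ∀ i j, 1 ≤ i → 1 ≤ j → α i + α j ≤ α (i + j))
    (A : ℝ≥0∞) (hA : Tendsto (fun n : ℕ => (α n : ℝ≥0∞) / n) atTop (𝓝 A)) :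
    (∀ x, IsLeast {d : ℕ | 1 ≤ d ∧ x ≤ α d} (firstIndex α x)) ∧
    Monotone (firstIndex α) ∧
    (∀ x y, firstIndex α (x + y) ≤ firstIndex α x + firstIndex α y) ∧
    Tendsto (fun x : ℝ≥0 => (firstIndex α x : ℝ≥0∞) / x) atTop (𝓝 A⁻¹) :=
  have hα := exists_le_of_superadditive hsuper hk hαk
  ⟨fun x => isLeast_firstIndex (hα x),
    fun _ y hxy => firstIndex_le_firstIndex hxy (hα y),
    fun x y => firstIndex_add_le hsuper (hα x) (hα y),
    tendsto_firstIndex_div hα hA⟩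

/-- Let `α` be a nondecreasing superadditive sequence of (positive)
natural numbers.  Then the sequence `←α_n = inf {d ≥ 1 | α d ≥ n}` (computed by `sInf` in
`ℕ`) is a well-defined natural number for every `n ≥ 1` (the set has a least element), is
nondecreasing and subadditive, and `lim (←α_n)/n = α̂⁻¹` where `α̂ = lim α n / n`; the
inverse is taken in `ℝ≥0∞`, realizing the conventions `0⁻¹ = ∞` and `∞⁻¹ = 0`. -/
theorem statement_5 (α : ℕ → ℕ)
    (hpos : ∀ n, 1 ≤ n → 1 ≤ α n)
    (hmono : ∀ m n, 1 ≤ m → m ≤ n → α m ≤ α n)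
    (hsuper : ∀ i j, 1 ≤ i → 1 ≤ j → α i + α j ≤ α (i + j))
    (A : ℝ≥0∞)
    (hA : Tendsto (fun n : ℕ => (α n : ℝ≥0∞) / (n : ℝ≥0∞)) atTop (𝓝 A)) :
    (∀ n, 1 ≤ n →
      IsLeast {d : ℕ | 1 ≤ d ∧ n ≤ α d} (sInf {d : ℕ | 1 ≤ d ∧ n ≤ α d})) ∧
    (∀ m n, 1 ≤ m → m ≤ n →
      sInf {d : ℕ | 1 ≤ d ∧ m ≤ α d} ≤ sInf {d : ℕ | 1 ≤ d ∧ n ≤ α d}) ∧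
    (∀ m n, 1 ≤ m → 1 ≤ n →
      sInf {d : ℕ | 1 ≤ d ∧ m + n ≤ α d} ≤
        sInf {d : ℕ | 1 ≤ d ∧ m ≤ α d} + sInf {d : ℕ | 1 ≤ d ∧ n ≤ α d}) ∧
    Tendsto (fun n : ℕ => ((sInf {d : ℕ | 1 ≤ d ∧ n ≤ α d} : ℕ) : ℝ≥0∞) / (n : ℝ≥0∞))
      atTop (𝓝 A⁻¹) := by
  obtain ⟨hleast, hmonotone, hsub, hlim⟩ :=
    statement_5_general (fun n => (α n : ℝ≥0)) le_rfl (Nat.cast_pos.2 (hpos 1 le_rfl))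
      (fun i j hi hj => mod_cast hsuper i j hi hj) A
      (by simpa only [ENNReal.coe_natCast] using hA)
  simp only [sInf_eq_firstIndex_natCast]
  exact ⟨fun n _ => by simpa only [Nat.cast_le] using hleast n,
    fun m n _ hmn => hmonotone (Nat.cast_le.2 hmn),
    fun m n _ _ => by simpa only [Nat.cast_add] using hsub m n,
    by simpa only [Function.comp_def, ENNReal.coe_natCast] using
      hlim.comp tendsto_natCast_atTop_atTop⟩
end

section
/- Let K be a field of characteristic zero, R = K[x_0,…,x_N], S = K[y_0,…,y_N], A an index set, and for each a ∈ A let I_a = {I_{a,n}}_{n≥1} be a differentially closed graded filtration of homogeneous ideals of R. Then: (1) the intersection filtration ∩_{a∈A} I_a = {∩_{a∈A} I_{a,n}}_{n≥1} is a differentially closed graded filtration, and (2) L^s(∩_{a∈A} I_a) = Σ_{a∈A} L^s(I_a) as subspaces of S, for every s ≥ 1. -/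
open MvPolynomial Filter Topology
open scoped ENNReal

/-- The differential operator `D_a = (1/a!) ∂^a/∂x^a`, characterized on monomials by
`D_a (x^b) = C(b,a) · x^(b-a)` when `b ≥ a` componentwise (and `0` otherwise), where
`C(b,a) = ∏ᵢ (bᵢ choose aᵢ)`; note that the binomial coefficient vanishes when
`b ≥ a` fails, so no case split is needed. -/
noncomputable def Dop {m : ℕ} {K : Type*} [CommSemiring K] (a : Fin m →₀ ℕ)
    (f : MvPolynomial (Fin m) K) : MvPolynomial (Fin m) K :=
  ∑ b ∈ f.support,
    MvPolynomial.monomial (b - a) ((((∏ i, Nat.choose (b i) (a i)) : ℕ) : K) * f.coeff b)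

/-- A filtration `{I n}` of ideals of `K[x_0,…,x_{m-1}]` is differentially closed if for
every `n ≥ 1`, every operator `D_a` with `|a| ≤ n - 1`, and every `F ∈ I n`, we have
`D_a F ∈ I (n - |a|)`. -/
def DiffClosed {m : ℕ} {K : Type*} [CommSemiring K]
    (I : ℕ → Ideal (MvPolynomial (Fin m) K)) : Prop :=
  ∀ n, 1 ≤ n → ∀ a : Fin m →₀ ℕ, (a.sum fun _ k => k) ≤ n - 1 →
    ∀ F ∈ I n, Dop a F ∈ I (n - a.sum fun _ k => k)

/-- The iterated partial derivative `∂^a/∂y^a`. -/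
noncomputable def multiPderiv {m : ℕ} {K : Type*} [CommSemiring K] (a : Fin m →₀ ℕ)
    (g : MvPolynomial (Fin m) K) : MvPolynomial (Fin m) K :=
  (List.finRange m).foldl (fun h i => (fun q => MvPolynomial.pderiv i q)^[a i] h) g

/-- The action `F ∘ g` of `R = K[x]` on `S = K[y]` by partial differentiation: the
monomial `x^a` acts on `g` as `∂^a g/∂y^a`, extended linearly. -/
noncomputable def diffAction {m : ℕ} {K : Type*} [CommSemiring K]
    (F g : MvPolynomial (Fin m) K) : MvPolynomial (Fin m) K :=
  ∑ a ∈ F.support, F.coeff a • multiPderiv a g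

/-- The perpendicular space `((I)_d)^⊥ = {g ∈ S_d | F ∘ g = 0 for all F ∈ I_d}` of the
degree-`d` part of an ideal `I ⊆ R`, inside `S_d`, for the differentiation action. -/
def perpSet {m : ℕ} {K : Type*} [CommSemiring K]
    (I : Ideal (MvPolynomial (Fin m) K)) (d : ℕ) : Set (MvPolynomial (Fin m) K) :=
  {g | g ∈ MvPolynomial.homogeneousSubmodule (Fin m) K d ∧
       ∀ F ∈ I, F ∈ MvPolynomial.homogeneousSubmodule (Fin m) K d → diffAction F g = 0}

/-- `L^s(I) = ⊕_{d ≥ s+1} ((I_{d-s})_d)^⊥ ⊆ S`, the (internal direct) sum of the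
perpendicular spaces, realized as the subspace of `S` spanned by them. -/
noncomputable def Lpow {m : ℕ} {K : Type*} [CommSemiring K]
    (I : ℕ → Ideal (MvPolynomial (Fin m) K)) (s : ℕ) :
    Submodule K (MvPolynomial (Fin m) K) :=
  Submodule.span K (⋃ d ∈ Set.Ici (s + 1), perpSet (I (d - s)) d)

/-- An ideal of a polynomial ring is homogeneous when it contains all homogeneous
components of its elements. -/
def IsHomogeneousIdeal {m : ℕ} {K : Type*} [CommSemiring K]
    (I : Ideal (MvPolynomial (Fin m) K)) : Prop :=
  ∀ f ∈ I, ∀ d : ℕ, MvPolynomial.homogeneousComponent d f ∈ I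

/-! On `S_d`, each monomial `x^a` of degree `d` acts as `a!` times the functional reading off the
coefficient of `y^a`. Hence `F ∘ g` is the constant `⟨F, g⟩` for the symmetric bilinear form
in which monomials are orthogonal with `⟨x^a, x^a⟩ = a!`. In characteristic zero this form is
nondegenerate on the finite-dimensional space of forms of degree `d`, so `U ↦ U^⊥` is an
inclusion-reversing involution of its subspaces and turns intersections into sums. Applying this in
each degree gives the formula for `L^s`; each filtration condition passes to intersections
directly. -/

section Orthogonal

open LinearMap.BilinForm

theorem orthogonal_iSup {R M : Type*} [CommSemiring R] [AddCommMonoid M] [Module R M]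
    (B : LinearMap.BilinForm R M) {ι : Sort*} (U : ι → Submodule R M) :
    B.orthogonal (⨆ i, U i) = ⨅ i, B.orthogonal (U i) := by
  refine le_antisymm (le_iInf fun i => orthogonal_le (le_iSup U i)) fun x hx n hn => ?_
  suffices ⨆ i, U i ≤ LinearMap.ker (B.flip x) from this hn
  exact iSup_le fun i u hu => (Submodule.mem_iInf _).1 hx i u hu

theorem orthogonal_iInf {K V : Type*} [Field K] [AddCommGroup V] [Module K V]
    [FiniteDimensional K V] {B : LinearMap.BilinForm K V} (hB : B.Nondegenerate) (hB' : B.IsRefl)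
    {ι : Sort*} (U : ι → Submodule K V) :
    B.orthogonal (⨅ i, U i) = ⨆ i, B.orthogonal (U i) := by
  calc B.orthogonal (⨅ i, U i)
      = B.orthogonal (⨅ i, B.orthogonal (B.orthogonal (U i))) := by
        simp only [orthogonal_orthogonal hB hB']
    _ = ⨆ i, B.orthogonal (U i) := by
        rw [← orthogonal_iSup, orthogonal_orthogonal hB hB']

end Orthogonal

section IteratedDerivative

variable {σ R : Type*} [CommSemiring R]

theorem coeff_iterate_pderiv (i : σ) (k : ℕ) (c : σ →₀ ℕ) (g : MvPolynomial σ R) :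
    coeff c ((pderiv i)^[k] g) =
      ((c i + 1).ascFactorial k : R) * coeff (c + Finsupp.single i k) g := by
  induction k generalizing g with
  | zero => simp
  | succ k ih =>
    rw [Function.iterate_succ_apply, ih, coeff_pderiv, add_assoc, ← Finsupp.single_add,
      Nat.ascFactorial_succ]
    simp only [Finsupp.add_apply, Finsupp.single_eq_same]
    push_cast
    ring

theorem coeff_foldl_iterate_pderiv (a : σ → ℕ) (c : σ →₀ ℕ) {l : List σ}
    (hl : l.Nodup) (g : MvPolynomial σ R) :
    coeff c (l.foldl (fun h i => (fun q => pderiv i q)^[a i] h) g) =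
      (l.map fun i => ((c i + 1).ascFactorial (a i) : R)).prod *
        coeff (c + (l.map fun i => Finsupp.single i (a i)).sum) g := by
  induction l generalizing g with
  | nil => simp
  | cons i l ih =>
    obtain ⟨hi, hl⟩ := List.nodup_cons.1 hl
    have hsum : (l.map fun j => Finsupp.single j (a j)).sum i = 0 := by
      rw [← Finsupp.applyAddHom_apply, map_list_sum, List.map_map]
      refine List.sum_eq_zero fun n hn => ?_
      obtain ⟨j, hj, rfl⟩ := List.mem_map.1 hn
      exact Finsupp.single_eq_of_ne fun h => hi (h ▸ hj)
    rw [List.foldl_cons, ih hl, coeff_iterate_pderiv, Finsupp.add_apply, hsum, add_zero,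
      List.map_cons, List.map_cons, List.prod_cons, List.sum_cons, add_assoc,
      add_comm (Finsupp.single i (a i))]
    ring

theorem coeff_multiPderiv {m : ℕ} (a c : Fin m →₀ ℕ) (g : MvPolynomial (Fin m) R) :
    coeff c (multiPderiv a g) =
      (∏ i, ((c i + 1).ascFactorial (a i) : R)) * coeff (c + a) g := by
  rw [multiPderiv, coeff_foldl_iterate_pderiv a c (List.nodup_finRange m), ← Fin.prod_univ_def,
    ← Fin.sum_univ_def, Finsupp.univ_sum_single]

theorem multiPderiv_of_isHomogeneous {m : ℕ} {a : Fin m →₀ ℕ} {g : MvPolynomial (Fin m) R}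
    (hg : g.IsHomogeneous a.degree) :
    multiPderiv a g = C ((∏ i, ((a i).factorial : R)) * coeff a g) := by
  ext c
  rw [coeff_multiPderiv]
  obtain rfl | hc := eq_or_ne c 0
  · rw [zero_add, coeff_zero_C]
    simp only [Finsupp.coe_zero, Pi.zero_apply, zero_add, Nat.one_ascFactorial]
  · have hdeg : (c + a).degree ≠ a.degree := by
      simpa [map_add, Finsupp.degree_eq_zero_iff] using hc
    rw [hg.coeff_eq_zero hdeg, mul_zero, coeff_C, if_neg hc.symm]

end IteratedDerivative

section ApolarForm

variable {σ R : Type*} [CommSemiring R]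

variable (σ R) in
/-- The apolar (Fischer) pairing on polynomials: monomials are pairwise orthogonal and
`⟨x^a, x^a⟩ = a!`. Both arguments live in the same ring, so `R` and `S` are identified through
`x_i ↔ y_i`. -/
noncomputable def apolarForm : LinearMap.BilinForm R (MvPolynomial σ R) :=
  (basisMonomials σ R).constr R fun a => (a.prod fun _ k => (k.factorial : R)) • lcoeff R a

theorem apolarForm_apply (F g : MvPolynomial σ R) :
    apolarForm σ R F g =
      ∑ a ∈ F.support, coeff a F * ((a.prod fun _ k => (k.factorial : R)) * coeff a g) := by
  rw [apolarForm, Module.Basis.constr_apply, Finsupp.sum, LinearMap.sum_apply]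
  rfl

theorem apolarForm_monomial_left (a : σ →₀ ℕ) (g : MvPolynomial σ R) :
    apolarForm σ R (monomial a 1) g = (a.prod fun _ k => (k.factorial : R)) * coeff a g :=
  LinearMap.congr_fun ((basisMonomials σ R).constr_basis R _ a) g

theorem isSymm_apolarForm : (apolarForm σ R).IsSymm := by
  classical
  refine ⟨fun F g => ?_⟩
  suffices apolarForm σ R = LinearMap.flip (apolarForm σ R) from LinearMap.congr_fun₂ this F g
  refine (basisMonomials σ R).ext fun a => (basisMonomials σ R).ext fun b => ?_
  rw [LinearMap.flip_apply, coe_basisMonomials, apolarForm_monomial_left, apolarForm_monomial_left,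
    coeff_monomial, coeff_monomial]
  obtain rfl | hab := eq_or_ne a b
  · rfl
  · simp [hab, hab.symm]

theorem nondegenerate_apolarForm_restrict {K : Type*} [CommRing K]
    [NoZeroDivisors K] [CharZero K] (d : ℕ) :
    ((apolarForm σ K).restrict (homogeneousSubmodule σ K d)).Nondegenerate := by
  have hsymm := (isSymm_apolarForm (σ := σ) (R := K)).restrict (homogeneousSubmodule σ K d)
  refine hsymm.isRefl.nondegenerate_iff_separatingRight.2 fun g hg => Subtype.ext ?_
  ext a
  by_cases ha : a.degree = d
  · have h : (a.prod fun _ k => (k.factorial : K)) * coeff a g.1 = 0 := by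
      rw [← apolarForm_monomial_left]
      exact hg ⟨monomial a 1, isHomogeneous_monomial 1 ha⟩
    have hfac : (a.prod fun _ k => (k.factorial : K)) ≠ 0 :=
      Finset.prod_ne_zero_iff.2 fun i _ => Nat.cast_ne_zero.2 (Nat.factorial_ne_zero _)
    exact (mul_eq_zero.1 h).resolve_left hfac
  · exact IsHomogeneous.coeff_eq_zero g.2 ha

theorem diffAction_eq_C_apolarForm {m d : ℕ} {F g : MvPolynomial (Fin m) R}
    (hF : F.IsHomogeneous d) (hg : g.IsHomogeneous d) :
    diffAction F g = C (apolarForm (Fin m) R F g) := by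
  rw [diffAction, apolarForm_apply, map_sum]
  refine Finset.sum_congr rfl fun a ha => ?_
  have had : a.degree = d := by_contra fun h => mem_support_iff.1 ha (hF.coeff_eq_zero h)
  rw [multiPderiv_of_isHomogeneous (had ▸ hg), smul_eq_C_mul, ← C_mul,
    Finsupp.prod_fintype _ _ fun _ => by simp]

end ApolarForm

section Perp

variable {σ R K : Type*} [CommSemiring R] [Field K] [CharZero K] {m : ℕ} {ι : Sort*}

/-- The degree-`d` part `I_d = I ∩ R_d` of an ideal, as a subspace of the space `R_d` of forms of
degree `d`. -/
noncomputable def degreePart (I : Ideal (MvPolynomial σ R)) (d : ℕ) :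
    Submodule R (homogeneousSubmodule σ R d) :=
  (I.restrictScalars R).submoduleOf (homogeneousSubmodule σ R d)

theorem degreePart_iInf (J : ι → Ideal (MvPolynomial σ R)) (d : ℕ) :
    degreePart (⨅ i, J i) d = ⨅ i, degreePart (J i) d := by
  simp only [degreePart, Submodule.submoduleOf, Submodule.restrictScalars_iInf,
    Submodule.comap_iInf]

/-- The perpendicular space `(I_d)^⊥`, as the orthogonal complement of `I_d` for the apolar form
on forms of degree `d`, viewed inside the polynomial ring. -/
noncomputable def perpSubmodule (I : Ideal (MvPolynomial σ R)) (d : ℕ) :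
    Submodule R (MvPolynomial σ R) :=
  (((apolarForm σ R).restrict (homogeneousSubmodule σ R d)).orthogonal (degreePart I d)).map
    (homogeneousSubmodule σ R d).subtype

theorem coe_perpSubmodule (I : Ideal (MvPolynomial (Fin m) R)) (d : ℕ) :
    (perpSubmodule I d : Set (MvPolynomial (Fin m) R)) = perpSet I d := by
  have hC {F g : MvPolynomial (Fin m) R} (hF : F.IsHomogeneous d) (hg : g.IsHomogeneous d) :
      diffAction F g = 0 ↔ apolarForm (Fin m) R F g = 0 := by
    rw [diffAction_eq_C_apolarForm hF hg, C_eq_zero]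
  ext g
  constructor
  · rintro ⟨g, hgI, rfl⟩
    exact ⟨g.2, fun F hF hFd => (hC hFd g.2).2 (hgI ⟨F, hFd⟩ hF)⟩
  · rintro ⟨hg, hgI⟩
    exact ⟨⟨g, hg⟩, fun F hF => (hC F.2 hg).1 (hgI F hF F.2), rfl⟩

theorem perpSubmodule_iInf [Finite σ] (J : ι → Ideal (MvPolynomial σ K)) (d : ℕ) :
    perpSubmodule (⨅ i, J i) d = ⨆ i, perpSubmodule (J i) d := by
  have : FiniteDimensional K (homogeneousSubmodule σ K d) :=
    Module.Finite.iff_fg.2 (homogeneousSubmodule_fg σ K d)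
  have hsymm := (isSymm_apolarForm (σ := σ) (R := K)).restrict (homogeneousSubmodule σ K d)
  simp only [perpSubmodule]
  rw [degreePart_iInf, orthogonal_iInf (nondegenerate_apolarForm_restrict d) hsymm.isRefl,
    Submodule.map_iSup]

theorem Lpow_eq_iSup_perpSubmodule (I : ℕ → Ideal (MvPolynomial (Fin m) R)) (s : ℕ) :
    Lpow I s = ⨆ d ∈ Set.Ici (s + 1), perpSubmodule (I (d - s)) d := by
  simp only [Lpow, ← coe_perpSubmodule, Submodule.span_iUnion₂, Submodule.span_eq]

theorem Lpow_iInf (I : ι → ℕ → Ideal (MvPolynomial (Fin m) K)) (s : ℕ) :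
    Lpow (fun n => ⨅ i, I i n) s = ⨆ i, Lpow (I i) s := by
  simp only [Lpow_eq_iSup_perpSubmodule, perpSubmodule_iInf]
  rw [iSup_comm]
  exact iSup_congr fun d => iSup_comm

end Perp

section Filtration

variable {R : Type*} [CommSemiring R] {ι : Sort*}

theorem iInf_mul_iInf_le_iInf {I J L : ι → Ideal R} (h : ∀ i, I i * J i ≤ L i) :
    (⨅ i, I i) * (⨅ i, J i) ≤ ⨅ i, L i :=
  le_iInf fun i => (Ideal.mul_mono (iInf_le I i) (iInf_le J i)).trans (h i)

theorem DiffClosed.iInf {m : ℕ} {I : ι → ℕ → Ideal (MvPolynomial (Fin m) R)}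
    (h : ∀ i, DiffClosed (I i)) : DiffClosed fun n => ⨅ i, I i n := fun n hn a ha F hF =>
  (Submodule.mem_iInf _).2 fun i => h i n hn a ha F ((Submodule.mem_iInf _).1 hF i)

end Filtration

theorem statement_12_general {m : ℕ} {K : Type*} [Field K] [CharZero K] {A : Sort*}
    (I : A → ℕ → Ideal (MvPolynomial (Fin m) K))
    (hfil : ∀ a, ∀ n, 1 ≤ n → I a (n + 1) ≤ I a n)
    (hgr : ∀ a, ∀ m n, 1 ≤ m → 1 ≤ n → I a m * I a n ≤ I a (m + n))
    (hdc : ∀ a, DiffClosed (I a)) :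
    ((∀ n, 1 ≤ n → (⨅ a, I a (n + 1)) ≤ ⨅ a, I a n) ∧
      (∀ m n, 1 ≤ m → 1 ≤ n → (⨅ a, I a m) * (⨅ a, I a n) ≤ ⨅ a, I a (m + n)) ∧
      DiffClosed (fun n => ⨅ a, I a n)) ∧
    (∀ s, Lpow (fun n => ⨅ a, I a n) s = ⨆ a, Lpow (I a) s) :=
  ⟨⟨fun n hn => iInf_mono fun a => hfil a n hn,
    fun m n hm hn => iInf_mul_iInf_le_iInf fun a => hgr a m n hm hn, DiffClosed.iInf hdc⟩,
    Lpow_iInf I⟩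

/-- (Proposition `IntersectionToSum`.)  Over a field `K` of
characteristic zero, if `{I_{a,n}}_n` is a differentially closed graded filtration of
homogeneous ideals of `R = K[x_0,…,x_N]` for each `a` in an index set `A`, then
(1) the intersection filtration `{⋂_a I_{a,n}}_n` is a differentially closed graded
filtration, and (2) `L^s(⋂_a I_a) = Σ_a L^s(I_a)` for every `s ≥ 1`. -/
theorem statement_12 {N : ℕ} {K : Type*} [Field K] [CharZero K] {A : Type*}
    (I : A → ℕ → Ideal (MvPolynomial (Fin (N + 1)) K))
    (hfil : ∀ a, ∀ n, 1 ≤ n → I a (n + 1) ≤ I a n)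
    (hgr : ∀ a, ∀ m n, 1 ≤ m → 1 ≤ n → I a m * I a n ≤ I a (m + n))
    (hhom : ∀ a, ∀ n, 1 ≤ n → IsHomogeneousIdeal (I a n))
    (hdc : ∀ a, DiffClosed (I a)) :
    ((∀ n, 1 ≤ n → (⨅ a, I a (n + 1)) ≤ ⨅ a, I a n) ∧
      (∀ m n, 1 ≤ m → 1 ≤ n → (⨅ a, I a m) * (⨅ a, I a n) ≤ ⨅ a, I a (m + n)) ∧
      DiffClosed (fun n => ⨅ a, I a n)) ∧
    (∀ s, 1 ≤ s → Lpow (fun n => ⨅ a, I a n) s = ⨆ a, Lpow (I a) s) :=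
  (statement_12_general I hfil hgr hdc).imp_right fun h s _ => h s
end
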